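/- arXiv:2507.09373 — 2 statements merged into one kernel-verified Lean document; each statement's English description precedes it below -/
import Mathlib

section
/- Let Γ = (Σ ∪ {ε})⁴ \ {(ε,ε,ε,ε)} and let flat : Γ* → Σ* be the map defined by flat((a₁,b₁,c₁,d₁) ⋯ (a_m,b_m,c_m,d_m)) = a₁⋯a_m b₁⋯b_m c₁⋯c_m d₁⋯d_m. Then there exists a regular language K ⊆ Γ* such that flat(K) ⊆ L_Z(ω) and the Zariski closure of φ(L_Z(ω)) in M_d(ℚ̄) equals the Zariski closure of φ(L_BZ(ω) ∪ flat(K)). -/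
noncomputable section

/-- The algebraic closure of `ℚ`. -/
abbrev Qbar : Type := AlgebraicClosure ℚ

/-- View a rational matrix inside `M_d(ℚ̄)`. -/
def liftMat {d : ℕ} (M : Matrix (Fin d) (Fin d) ℚ) : Matrix (Fin d) (Fin d) Qbar :=
  M.map (algebraMap ℚ Qbar)

/-- The Zariski closure of a set of `d × d` matrices over `ℚ̄`, identified with affine
space `ℚ̄^(d²)`: the common zero set of all polynomials vanishing on the set. -/
def matZClosure (d : ℕ) (S : Set (Matrix (Fin d) (Fin d) Qbar)) :
    Set (Matrix (Fin d) (Fin d) Qbar) :=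
  {A | ∀ p : MvPolynomial (Fin d × Fin d) Qbar,
      (∀ B ∈ S, MvPolynomial.eval (fun ij => B ij.1 ij.2) p = 0) →
      MvPolynomial.eval (fun ij => A ij.1 ij.2) p = 0}

/-- Threshold `η(d) = 2^(d(d+3)) + 1`. -/
def eta (d : ℕ) : ℤ := 2 ^ (d * (d + 3)) + 1

/-- The zero-weight language of `ω`. -/
def zeroLang {α : Type*} (ω : List α → ℤ) : Set (List α) :=
  {w | ω w = 0}

/-- The bounded zero-weight language of `ω`: words of weight zero all of whose
prefixes have weight in `[-η(d), η(d)]`. -/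
def boundedZeroLang {α : Type*} (d : ℕ) (ω : List α → ℤ) : Set (List α) :=
  {w | ω w = 0 ∧ ∀ u : List α, u <+: w → -eta d ≤ ω u ∧ ω u ≤ eta d}

/-- The alphabet `Γ = (Σ ∪ {ε})⁴ \ {(ε,ε,ε,ε)}`, where `ε` is encoded by `none`. -/
def Gam (α : Type*) : Type _ :=
  {g : Option α × Option α × Option α × Option α // g ≠ (none, none, none, none)}

/-- `flat((a₁,b₁,c₁,d₁)⋯(aₘ,bₘ,cₘ,dₘ)) = a₁⋯aₘ b₁⋯bₘ c₁⋯cₘ d₁⋯dₘ` (dropping `ε`'s). -/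
def flat {α : Type*} (W : List (Gam α)) : List α :=
  W.filterMap (fun g => g.val.1) ++ W.filterMap (fun g => g.val.2.1) ++
    W.filterMap (fun g => g.val.2.2.1) ++ W.filterMap (fun g => g.val.2.2.2)

open MvPolynomial in
/-- If a sequence of points can be shifted backwards by polynomial substitutions, then a polynomial
vanishing on a tail of the sequence vanishes at its first point. -/
theorem eval_zero_of_eventually {σ K : Type*} [Finite σ] [Field K] (v : ℕ → σ → K)
    (hv : ∀ (N : ℕ) (p : MvPolynomial σ K), ∃ q, ∀ m, eval (v (m + N)) q = eval (v m) p)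
    (p : MvPolynomial σ K) (n₀ : ℕ) (h : ∀ m ≥ n₀, eval (v m) p = 0) : eval (v 0) p = 0 := by
  let J : ℕ →o Ideal (MvPolynomial σ K) :=
    { toFun := fun n => ⨅ m : {m // n ≤ m}, RingHom.ker (eval (v m.1))
      monotone' := by
        intro a b hab
        refine le_iInf fun m => iInf_le_of_le ⟨m.1, hab.trans m.2⟩ le_rfl }
  have hJ : ∀ n q, q ∈ J n ↔ ∀ m ≥ n, eval (v m) q = 0 := by
    intro n q
    change q ∈ ⨅ m : {m // n ≤ m}, RingHom.ker (eval (v m.1)) ↔ _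
    simp [RingHom.mem_ker]
  obtain ⟨N, hN⟩ := monotone_stabilizes_iff_noetherian.2
    (inferInstance : IsNoetherianRing (MvPolynomial σ K)) J
  obtain ⟨q, hq⟩ := hv N p
  have hq' : q ∈ J (N + n₀) := by
    rw [hJ]
    intro m hm
    obtain ⟨k, rfl⟩ := Nat.exists_eq_add_of_le' (show N ≤ m by omega)
    rw [hq]
    exact h k (by omega)
  rw [← hN (N + n₀) (by omega), hJ] at hq'
  rw [← hq 0]
  exact hq' _ (by omega)

open MvPolynomial in
/-- If a polynomial vanishes on `A * U ^ m * B * V ^ m * C` for all large `m`, where `U` and `V` are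
invertible, then it vanishes on `A * B * C`. -/
theorem eval_zero_of_eventually_pow {n K : Type*} [Fintype n] [DecidableEq n] [Field K]
    (U V : (Matrix n n K)ˣ) (A B C : Matrix n n K) (p : MvPolynomial (n × n) K) (n₀ : ℕ)
    (h : ∀ m ≥ n₀, eval (fun ij : n × n =>
      (A * (U : Matrix n n K) ^ m * B * (V : Matrix n n K) ^ m * C) ij.1 ij.2) p = 0) :
    eval (fun ij : n × n => (A * B * C) ij.1 ij.2) p = 0 := by
  let v : ℕ → (n × n) ⊕ (n × n) → K := fun m =>
    Sum.elim (fun ij => ((U : Matrix n n K) ^ m) ij.1 ij.2)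
      (fun ij => ((V : Matrix n n K) ^ m) ij.1 ij.2)
  let XU : Matrix n n (MvPolynomial ((n × n) ⊕ (n × n)) K) := fun i j => X (Sum.inl (i, j))
  let XV : Matrix n n (MvPolynomial ((n × n) ⊕ (n × n)) K) := fun i j => X (Sum.inr (i, j))
  let cst : Matrix n n K → Matrix n n (MvPolynomial ((n × n) ⊕ (n × n)) K) := fun M =>
    M.map MvPolynomial.C
  have hXU : ∀ m, XU.map (eval (v m)) = (U : Matrix n n K) ^ m := by
    intro m; ext i j; rw [Matrix.map_apply]; simp [XU, v]
  have hXV : ∀ m, XV.map (eval (v m)) = (V : Matrix n n K) ^ m := by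
    intro m; ext i j; rw [Matrix.map_apply]; simp [XV, v]
  have hcst : ∀ m M, (cst M).map (eval (v m)) = M := by
    intro m M; ext i j; simp [cst]
  have hbind : ∀ {τ : Type _} (m : ℕ) (g : τ → MvPolynomial ((n × n) ⊕ (n × n)) K)
      (q : MvPolynomial τ K), eval (v m) (bind₁ g q) = eval (fun i => eval (v m) (g i)) q := by
    intro τ m g q
    exact eval₂Hom_bind₁ (RingHom.id K) (v m) g q
  let q : MvPolynomial ((n × n) ⊕ (n × n)) K :=
    bind₁ (fun ij : n × n => (cst A * XU * cst B * XV * cst C) ij.1 ij.2) p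
  have hq : ∀ m, eval (v m) q = eval (fun ij : n × n =>
      (A * (U : Matrix n n K) ^ m * B * (V : Matrix n n K) ^ m * C) ij.1 ij.2) p := by
    intro m
    rw [hbind]
    congr 2
    funext ij
    simp only [RingHom.map_matrix_mul, Matrix.map_mul, hXU, hXV, hcst]
  have key := eval_zero_of_eventually v ?_ q n₀ (fun m hm => (hq m).trans (h m hm))
  · rw [hq] at key
    simpa using key
  · intro N r
    refine ⟨bind₁ (Sum.elim (fun ij => (cst ((U⁻¹ ^ N : (Matrix n n K)ˣ) : Matrix n n K) * XU)
      ij.1 ij.2) (fun ij => (cst ((V⁻¹ ^ N : (Matrix n n K)ˣ) : Matrix n n K) * XV)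
      ij.1 ij.2)) r, fun m => ?_⟩
    rw [hbind]
    congr 2
    have hW : ∀ W : (Matrix n n K)ˣ, ((W⁻¹ ^ N : (Matrix n n K)ˣ) : Matrix n n K) *
        (W : Matrix n n K) ^ (m + N) = (W : Matrix n n K) ^ m := by
      intro W
      rw [← Units.val_pow_eq_pow_val, ← Units.val_mul, ← Units.val_pow_eq_pow_val]
      congr 1
      rw [add_comm, pow_add, inv_pow, inv_mul_cancel_left]
    funext s
    rcases s with ij | ij
    · simp only [Sum.elim_inl, RingHom.map_matrix_mul, hXU, hcst, hW, v]
    · simp only [Sum.elim_inr, RingHom.map_matrix_mul, hXV, hcst, hW, v]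

/-- An endomorphism whose kernel and range are disjoint squares to its product with a unit. -/
theorem exists_unit_mul_self {K V : Type*} [Field K] [AddCommGroup V] [Module K V]
    [FiniteDimensional K V] (f : Module.End K V)
    (hf : Disjoint (LinearMap.ker f) (LinearMap.range f)) :
    ∃ u : (Module.End K V)ˣ, f * f = f * u := by
  have hc : IsCompl (LinearMap.ker f) (LinearMap.range f) := by
    rw [Submodule.isCompl_iff_disjoint _ _
      (by rw [add_comm, LinearMap.finrank_range_add_finrank_ker])]
    exact hf
  let π : Module.End K V := Submodule.projection _ _ hc
  have hπ : ∀ x, π x ∈ LinearMap.ker f := fun x => Submodule.projection_apply_mem _ x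
  have hu : IsUnit (f + π) := by
    rw [LinearMap.isUnit_iff_ker_eq_bot, Submodule.eq_bot_iff]
    intro x hx
    have hx' : f x + π x = 0 := hx
    have h1 : π x ∈ LinearMap.range f := by
      rw [eq_neg_of_add_eq_zero_right hx']
      exact neg_mem ⟨x, rfl⟩
    have h2 : π x = 0 := (Submodule.disjoint_def.1 hf) _ (hπ x) h1
    have h3 : x ∈ LinearMap.ker f := by simpa [h2] using hx'
    rw [← h2]
    exact (Submodule.projection_apply_of_mem_left hc h3).symm
  refine ⟨hu.unit, ?_⟩
  ext x
  have : f (π x) = 0 := hπ x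
  simp [this]

/-- An endomorphism of rank `k` has a range spanned by `k` independent vectors, and the kernel of
a linear map to `Fin k → K`. -/
theorem exists_basis_range_ker_eq {K V : Type*} [Field K] [AddCommGroup V] [Module K V]
    [FiniteDimensional K V] (k : ℕ) (f : Module.End K V)
    (hf : Module.finrank K (LinearMap.range f) = k) :
    ∃ (c : Fin k → V) (D : V →ₗ[K] Fin k → K), LinearIndependent K c ∧
      Submodule.span K (Set.range c) = LinearMap.range f ∧
      LinearMap.ker D = LinearMap.ker f := by
  have b := Module.finBasisOfFinrankEq K (LinearMap.range f) hf
  refine ⟨fun i => (b i : V), b.equivFun.toLinearMap ∘ₗ f.rangeRestrict, ?_, ?_, ?_⟩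
  · exact b.linearIndependent.map' (LinearMap.range f).subtype (Submodule.ker_subtype _)
  · have := congrArg (Submodule.map (LinearMap.range f).subtype) b.span_eq
    rw [Submodule.map_span, Submodule.map_subtype_top, ← Set.range_comp] at this
    exact this
  · rw [LinearMap.ker_comp, LinearEquiv.ker, Submodule.comap_bot, LinearMap.ker_rangeRestrict]

/-- A skew family of endomorphisms of rank `k` has bounded length. -/
theorem skew_length_le {K V : Type*} [Field K] [AddCommGroup V] [Module K V]
    [FiniteDimensional K V] (k L : ℕ) (B : ℕ → Module.End K V)
    (hrank : ∀ j ≤ L, Module.finrank K (LinearMap.range (B j)) = k)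
    (hle : ∀ i j, i ≤ j → j ≤ L → ¬ Disjoint (LinearMap.range (B i)) (LinearMap.ker (B j)))
    (hsucc : ∀ j < L, Disjoint (LinearMap.range (B (j + 1))) (LinearMap.ker (B j))) :
    L ≤ Module.finrank K (MultilinearMap K (fun _ : Fin k => V) K) := by
  have hex : ∀ j, ∃ (c : Fin k → V) (D : V →ₗ[K] Fin k → K), j ≤ L →
      LinearIndependent K c ∧ Submodule.span K (Set.range c) = LinearMap.range (B j) ∧
      LinearMap.ker D = LinearMap.ker (B j) := by
    intro j
    by_cases hj : j ≤ L
    · obtain ⟨c, D, h⟩ := exists_basis_range_ker_eq k (B j) (hrank j hj)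
      exact ⟨c, D, fun _ => h⟩
    · exact ⟨0, 0, fun h => absurd h hj⟩
  choose c D hcD using hex
  let g : ℕ → MultilinearMap K (fun _ : Fin k => V) K := fun j =>
    (Matrix.detRowAlternating.compLinearMap (D j)).toMultilinearMap
  have hg : ∀ i j, i ≤ L → j ≤ L →
      (g j (c i) ≠ 0 ↔ Disjoint (LinearMap.range (B i)) (LinearMap.ker (B j))) := by
    intro i j hi hj
    obtain ⟨hc, hs, -⟩ := hcD i hi
    obtain ⟨-, -, hk⟩ := hcD j hj
    have h1 : g j (c i) = Matrix.det (Matrix.of (fun l => D j (c i l))) := rfl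
    rw [h1, ← isUnit_iff_ne_zero, ← Matrix.isUnit_iff_isUnit_det,
      ← Matrix.linearIndependent_rows_iff_isUnit, ← hs, ← hk]
    constructor
    · intro h
      exact Submodule.range_ker_disjoint (f := D j) (v := c i) h
    · intro h
      exact ((D j).linearIndependent_iff_of_disjoint h).2 hc
  have hli : LinearIndependent K (fun j : Fin L => g j) := by
    rw [Fintype.linearIndependent_iff]
    intro a ha
    by_contra! hne
    obtain ⟨i₀, hi₀⟩ := hne
    obtain ⟨i, hi, hmin⟩ := WellFounded.has_min (wellFounded_lt (α := Fin L))
      {i | a i ≠ 0} ⟨i₀, hi₀⟩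
    have hev := congrArg (fun m => m (c (i + 1))) ha
    simp only [_root_.sum_apply, _root_.smul_apply, _root_.zero_apply] at hev
    rw [Finset.sum_eq_single i] at hev
    · have h2 : g i (c (i + 1)) ≠ 0 := (hg _ _ (by omega) (by omega)).2 (hsucc i i.2)
      exact (mul_ne_zero hi h2) hev
    · intro j _ hji
      rcases lt_or_gt_of_ne hji with hlt | hgt
      · have : a j = 0 := by
          by_contra h
          exact hmin j h hlt
        simp [this]
      · have : g j (c (i + 1)) = 0 := by
          by_contra h
          exact hle (i + 1) j hgt (by omega) ((hg _ _ (by omega) (by omega)).1 h)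
        simp [this]
    · simp
  simpa using hli.fintype_card_le_finrank

theorem finrank_range_mul_mul_le {K V : Type*} [Field K] [AddCommGroup V] [Module K V]
    [FiniteDimensional K V] (f g h : Module.End K V) :
    Module.finrank K (LinearMap.range (f * (g * h))) ≤ Module.finrank K (LinearMap.range g) := by
  have h1 : LinearMap.range (f * (g * h)) = (LinearMap.range (g * h)).map f :=
    LinearMap.range_comp _ _
  rw [h1]
  exact (Submodule.finrank_map_le _ _).trans
    (Submodule.finrank_mono (LinearMap.range_comp_le_range h g))

/-- In every sufficiently long product of endomorphisms some factor has disjoint kernel and range,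
unless the whole product has small rank. -/
theorem exists_disjoint_factor_or_rank_lt (K V : Type*) [Field K] [AddCommGroup V] [Module K V]
    [FiniteDimensional K V] (r k : ℕ) (hk : k + r = Module.finrank K V + 1) :
    ∃ N : ℕ, 0 < N ∧ ∀ P : ℕ → ℕ → Module.End K V,
      (∀ i j l, i ≤ j → j ≤ l → P i j * P j l = P i l) →
      (∃ i j, i < j ∧ j ≤ N ∧ Disjoint (LinearMap.range (P i j)) (LinearMap.ker (P i j))) ∨
      Module.finrank K (LinearMap.range (P 0 N)) < k := by
  induction r generalizing k with
  | zero =>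
    refine ⟨1, one_pos, fun P _ => Or.inr ?_⟩
    have := Submodule.finrank_le (LinearMap.range (P 0 1))
    omega
  | succ r ih =>
    obtain ⟨N, hN, ih⟩ := ih (k + 1) (by omega)
    set L := Module.finrank K (MultilinearMap K (fun _ : Fin k => V) K) + 1 with hL
    refine ⟨(L + 1) * N, by positivity, fun P hP => ?_⟩
    by_contra! hcon
    obtain ⟨hgood, hrk⟩ := hcon
    have hmul : ∀ i j, i ≤ j → i * N ≤ j * N := fun i j h => Nat.mul_le_mul_right N h
    have hge : ∀ i j, i ≤ j → j ≤ L + 1 →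
        k ≤ Module.finrank K (LinearMap.range (P (i * N) (j * N))) := by
      intro i j hij hj
      refine hrk.trans ?_
      rw [← hP 0 (i * N) _ (Nat.zero_le _) (hmul i (L + 1) (hij.trans hj)),
        ← hP (i * N) (j * N) _ (hmul i j hij) (hmul j (L + 1) hj)]
      exact finrank_range_mul_mul_le _ _ _
    have hsm : ∀ i, i ≤ L →
        Module.finrank K (LinearMap.range (P (i * N) ((i + 1) * N))) = k := by
      intro i hi
      refine le_antisymm ?_ (hge i (i + 1) (by omega) (by omega))
      have hle := hmul (i + 1) (L + 1) (by omega)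
      have hi1 : (i + 1) * N = i * N + N := by ring
      rcases ih (fun a b => P (i * N + a) (i * N + b))
        (fun a b c hab hbc => hP _ _ _ (by omega) (by omega)) with ⟨a, b, hab, hb, hd⟩ | hlt
      · exact absurd hd (hgood _ _ (by omega) (by omega))
      · rw [hi1]
        simpa using Nat.lt_succ_iff.1 hlt
    have hrange : ∀ i j, i < j → j ≤ L + 1 →
        LinearMap.range (P (i * N) (j * N)) = LinearMap.range (P (i * N) ((i + 1) * N)) := by
      intro i j hij hj
      refine Submodule.eq_of_le_of_finrank_le ?_ ?_
      · rw [← hP (i * N) ((i + 1) * N) _ (hmul _ _ (by omega)) (hmul _ _ (by omega))]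
        exact LinearMap.range_comp_le_range _ _
      · rw [hsm i (by omega)]
        exact hge i j hij.le hj
    have hker : ∀ i j, i ≤ j → j ≤ L →
        LinearMap.ker (P (j * N) ((j + 1) * N)) = LinearMap.ker (P (i * N) ((j + 1) * N)) := by
      intro i j hij hj
      refine Submodule.eq_of_le_of_finrank_le ?_ ?_
      · rw [← hP (i * N) (j * N) ((j + 1) * N) (hmul _ _ (by omega)) (hmul _ _ (by omega))]
        exact LinearMap.ker_le_ker_comp _ _
      · have h1 := LinearMap.finrank_range_add_finrank_ker (P (i * N) ((j + 1) * N))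
        have h2 := LinearMap.finrank_range_add_finrank_ker (P (j * N) ((j + 1) * N))
        have h3 := hge i (j + 1) (by omega) (by omega)
        rw [hsm j hj] at h2
        omega
    have := skew_length_le k L (fun j => P (j * N) ((j + 1) * N)) hsm ?_ ?_
    · omega
    · intro i j hij hj hdis
      refine hgood (i * N) ((j + 1) * N) ?_ (hmul _ _ (by omega)) ?_
      · exact Nat.mul_lt_mul_of_pos_right (by omega) hN
      · rw [← hker i j hij hj, hrange i (j + 1) (by omega) (by omega)]
        exact hdis
    · intro j hj
      rw [Submodule.disjoint_def]
      rintro _ ⟨y, rfl⟩ hx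
      have h1 := hker j (j + 1) (by omega) (by omega)
      have h2 : y ∈ LinearMap.ker (P (j * N) ((j + 1 + 1) * N)) := by
        rw [← hP (j * N) ((j + 1) * N) _ (hmul _ _ (by omega)) (hmul _ _ (by omega))]
        exact hx
      rw [← h1] at h2
      exact h2

/-- Every sufficiently long product of square matrices has a contiguous factor `M` such that
`M * M = M * U` for some invertible `U`. -/
theorem exists_pumpable_factor (K : Type*) [Field K] (d : ℕ) :
    ∃ N : ℕ, ∀ P : ℕ → ℕ → Matrix (Fin d) (Fin d) K,
      (∀ i j l, i ≤ j → j ≤ l → P i j * P j l = P i l) →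
      ∃ i j, i < j ∧ j ≤ N ∧ ∃ U : (Matrix (Fin d) (Fin d) K)ˣ, P i j * P i j = P i j * U := by
  obtain ⟨N, -, hN⟩ := exists_disjoint_factor_or_rank_lt K (Fin d → K)
    (Module.finrank K (Fin d → K) + 1) 0 (by omega)
  refine ⟨N, fun P hP => ?_⟩
  let e := Matrix.toLinAlgEquiv' (R := K) (n := Fin d)
  rcases hN (fun i j => e (P i j)) (fun i j l hij hjl => by rw [← map_mul, hP i j l hij hjl]) with
    ⟨i, j, hij, hj, hd⟩ | h
  · obtain ⟨u, hu⟩ := exists_unit_mul_self _ hd.symm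
    refine ⟨i, j, hij, hj, Units.map e.symm.toAlgHom.toRingHom.toMonoidHom u, ?_⟩
    apply e.injective
    rw [map_mul, map_mul, hu]
    congr 1
    exact (e.apply_symm_apply _).symm
  · omega

theorem prefix_append_cases {β : Type*} {U V W : List β} (h : U <+: V ++ W) :
    U <+: V ∨ ∃ T, T <+: W ∧ U = V ++ T := by
  obtain ⟨S, hS⟩ := h
  rcases List.append_eq_append_iff.1 hS with ⟨T, h1, -⟩ | ⟨T, h1, h2⟩
  · exact Or.inl ⟨T, h1.symm⟩
  · exact Or.inr ⟨T, ⟨S, h2.symm⟩, h1⟩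

theorem weight_flat {α : Type*} (ω : List α → ℤ)
    (hω_app : ∀ u v : List α, ω (u ++ v) = ω u + ω v) (W : List (Gam α)) :
    ω (flat W) = ω (W.filterMap fun g => g.val.1) + ω (W.filterMap fun g => g.val.2.1) +
      ω (W.filterMap fun g => g.val.2.2.1) + ω (W.filterMap fun g => g.val.2.2.2) := by
  simp only [flat, hω_app]

theorem weight_flat_append {α : Type*} (ω : List α → ℤ)
    (hω_app : ∀ u v : List α, ω (u ++ v) = ω u + ω v) (U V : List (Gam α)) :
    ω (flat (U ++ V)) = ω (flat U) + ω (flat V) := by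
  simp only [weight_flat ω hω_app, List.filterMap_append, hω_app]
  ring

/-- The words over `Gam α` of total weight zero all of whose prefixes have weight at most `B` in
absolute value. -/
def syncLang {α : Type*} (ω : List α → ℤ) (B : ℤ) : Set (List (Gam α)) :=
  {W | ω (flat W) = 0 ∧ ∀ U, U <+: W → |ω (flat U)| ≤ B}

theorem syncLang_neg {α : Type*} (ω : List α → ℤ) (B : ℤ) :
    syncLang (fun w => -ω w) B = syncLang ω B := by
  ext W
  simp [syncLang]

theorem syncLang_isRegular {α : Type*} (ω : List α → ℤ)
    (hω_app : ∀ u v : List α, ω (u ++ v) = ω u + ω v) (B : ℤ) :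
    Language.IsRegular (syncLang ω B : Language (Gam α)) := by
  let R : ℤ → Language (Gam α) := fun s =>
    {W | s + ω (flat W) = 0 ∧ ∀ U, U <+: W → |s + ω (flat U)| ≤ B}
  let S : Language (Gam α) := syncLang ω B
  suffices h : S.IsRegular from h
  rw [Language.isRegular_iff_finite_range_leftQuotient]
  refine (((Set.finite_Icc (-B) B).image R).insert 0).subset ?_
  rintro _ ⟨U, rfl⟩
  by_cases hU : ∀ T, T <+: U → |ω (flat T)| ≤ B
  · refine Or.inr ⟨ω (flat U), abs_le.1 (hU U (List.prefix_refl U)), ?_⟩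
    ext W
    rw [Language.mem_leftQuotient]
    constructor
    · rintro ⟨h0, hb⟩
      refine ⟨by rw [weight_flat_append ω hω_app]; exact h0, fun T hT => ?_⟩
      rcases prefix_append_cases hT with h | ⟨S, hS, rfl⟩
      · exact hU T h
      · rw [weight_flat_append ω hω_app]
        exact hb S hS
    · rintro ⟨h0, hb⟩
      refine ⟨by rw [← weight_flat_append ω hω_app]; exact h0, fun T hT => ?_⟩
      rw [← weight_flat_append ω hω_app]
      exact hb _ ((List.prefix_append_right_inj U).2 hT)
  · refine Or.inl ?_
    ext W
    rw [Language.mem_leftQuotient]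
    refine ⟨fun h => ?_, fun h => (Language.notMem_zero W h).elim⟩
    exact absurd (fun T hT => h.2 T (hT.trans (List.prefix_append U W))) hU

/-- The four words can be read in parallel so that the total weight read so far never exceeds `B`
in absolute value. -/
def Schedulable {α : Type*} (ω : List α → ℤ) (B : ℤ) (u₁ u₂ u₃ u₄ : List α) : Prop :=
  ∃ W : List (Gam α), (W.filterMap fun g => g.val.1) = u₁ ∧
    (W.filterMap fun g => g.val.2.1) = u₂ ∧ (W.filterMap fun g => g.val.2.2.1) = u₃ ∧
    (W.filterMap fun g => g.val.2.2.2) = u₄ ∧ ∀ U, U <+: W → |ω (flat U)| ≤ B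

namespace Schedulable

variable {α : Type*} {ω : List α → ℤ} {B : ℤ} {u₁ u₂ u₃ u₄ v : List α}

theorem nil (hω_nil : ω [] = 0) (hB : 0 ≤ B) : Schedulable ω B [] [] [] [] := by
  refine ⟨[], rfl, rfl, rfl, rfl, fun U hU => ?_⟩
  rw [List.prefix_nil.1 hU]
  simpa [flat, hω_nil] using hB

theorem filterMap_append_map_some {β : Type*} (f : β → Option α) (e : α → β)
    (h : ∀ a, f (e a) = some a) (W : List β) (v : List α) :
    (W ++ v.map e).filterMap f = W.filterMap f ++ v := by
  rw [List.filterMap_append, List.filterMap_map, show f ∘ e = some from funext h,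
    List.filterMap_some]

theorem filterMap_append_map_none {β : Type*} (f : β → Option α) (e : α → β)
    (h : ∀ a, f (e a) = none) (W : List β) (v : List α) :
    (W ++ v.map e).filterMap f = W.filterMap f := by
  rw [List.filterMap_append, List.filterMap_map, show f ∘ e = fun _ => none from funext h,
    List.filterMap_none, List.append_nil]

/-- Reading a further word letter by letter along an embedding of the alphabet. -/
theorem bound_append_map (e : α → Gam α)
    (he : ∀ (W : List (Gam α)) v, ω (flat (W ++ v.map e)) = ω (flat W) + ω v) (W : List (Gam α))
    (hW : ∀ U, U <+: W → |ω (flat U)| ≤ B)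
    (hv : ∀ v', v' <+: v → |ω (flat W) + ω v'| ≤ B) (U : List (Gam α)) (hU : U <+: W ++ v.map e) :
    |ω (flat U)| ≤ B := by
  rcases prefix_append_cases hU with h | ⟨S, hS, rfl⟩
  · exact hW U h
  · rw [List.prefix_iff_eq_take, ← List.map_take] at hS
    rw [hS, he]
    exact hv _ (List.take_prefix _ _)

theorem append_first (hω_app : ∀ u v : List α, ω (u ++ v) = ω u + ω v)
    (h : Schedulable ω B u₁ u₂ u₃ u₄)
    (hv : ∀ v', v' <+: v → |ω u₁ + ω u₂ + ω u₃ + ω u₄ + ω v'| ≤ B) :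
    Schedulable ω B (u₁ ++ v) u₂ u₃ u₄ := by
  obtain ⟨W, rfl, rfl, rfl, rfl, hW⟩ := h
  simp only [← weight_flat ω hω_app] at hv
  let e : α → Gam α := fun a => ⟨(some a, none, none, none), by simp⟩
  have h1 := filterMap_append_map_some (fun g : Gam α => g.val.1) e fun _ => rfl
  have h2 := filterMap_append_map_none (fun g : Gam α => g.val.2.1) e fun _ => rfl
  have h3 := filterMap_append_map_none (fun g : Gam α => g.val.2.2.1) e fun _ => rfl
  have h4 := filterMap_append_map_none (fun g : Gam α => g.val.2.2.2) e fun _ => rfl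
  refine ⟨W ++ v.map e, h1 W v, h2 W v, h3 W v, h4 W v, bound_append_map e (fun W v => ?_) W hW hv⟩
  simp only [weight_flat ω hω_app, h1, h2, h3, h4, hω_app]
  ring

theorem append_second (hω_app : ∀ u v : List α, ω (u ++ v) = ω u + ω v)
    (h : Schedulable ω B u₁ u₂ u₃ u₄)
    (hv : ∀ v', v' <+: v → |ω u₁ + ω u₂ + ω u₃ + ω u₄ + ω v'| ≤ B) :
    Schedulable ω B u₁ (u₂ ++ v) u₃ u₄ := by
  obtain ⟨W, rfl, rfl, rfl, rfl, hW⟩ := h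
  simp only [← weight_flat ω hω_app] at hv
  let e : α → Gam α := fun a => ⟨(none, some a, none, none), by simp⟩
  have h1 := filterMap_append_map_none (fun g : Gam α => g.val.1) e fun _ => rfl
  have h2 := filterMap_append_map_some (fun g : Gam α => g.val.2.1) e fun _ => rfl
  have h3 := filterMap_append_map_none (fun g : Gam α => g.val.2.2.1) e fun _ => rfl
  have h4 := filterMap_append_map_none (fun g : Gam α => g.val.2.2.2) e fun _ => rfl
  refine ⟨W ++ v.map e, h1 W v, h2 W v, h3 W v, h4 W v, bound_append_map e (fun W v => ?_) W hW hv⟩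
  simp only [weight_flat ω hω_app, h1, h2, h3, h4, hω_app]
  ring

theorem append_third (hω_app : ∀ u v : List α, ω (u ++ v) = ω u + ω v)
    (h : Schedulable ω B u₁ u₂ u₃ u₄)
    (hv : ∀ v', v' <+: v → |ω u₁ + ω u₂ + ω u₃ + ω u₄ + ω v'| ≤ B) :
    Schedulable ω B u₁ u₂ (u₃ ++ v) u₄ := by
  obtain ⟨W, rfl, rfl, rfl, rfl, hW⟩ := h
  simp only [← weight_flat ω hω_app] at hv
  let e : α → Gam α := fun a => ⟨(none, none, some a, none), by simp⟩
  have h1 := filterMap_append_map_none (fun g : Gam α => g.val.1) e fun _ => rfl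
  have h2 := filterMap_append_map_none (fun g : Gam α => g.val.2.1) e fun _ => rfl
  have h3 := filterMap_append_map_some (fun g : Gam α => g.val.2.2.1) e fun _ => rfl
  have h4 := filterMap_append_map_none (fun g : Gam α => g.val.2.2.2) e fun _ => rfl
  refine ⟨W ++ v.map e, h1 W v, h2 W v, h3 W v, h4 W v, bound_append_map e (fun W v => ?_) W hW hv⟩
  simp only [weight_flat ω hω_app, h1, h2, h3, h4, hω_app]
  ring

theorem append_fourth (hω_app : ∀ u v : List α, ω (u ++ v) = ω u + ω v)
    (h : Schedulable ω B u₁ u₂ u₃ u₄)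
    (hv : ∀ v', v' <+: v → |ω u₁ + ω u₂ + ω u₃ + ω u₄ + ω v'| ≤ B) :
    Schedulable ω B u₁ u₂ u₃ (u₄ ++ v) := by
  obtain ⟨W, rfl, rfl, rfl, rfl, hW⟩ := h
  simp only [← weight_flat ω hω_app] at hv
  let e : α → Gam α := fun a => ⟨(none, none, none, some a), by simp⟩
  have h1 := filterMap_append_map_none (fun g : Gam α => g.val.1) e fun _ => rfl
  have h2 := filterMap_append_map_none (fun g : Gam α => g.val.2.1) e fun _ => rfl
  have h3 := filterMap_append_map_none (fun g : Gam α => g.val.2.2.1) e fun _ => rfl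
  have h4 := filterMap_append_map_some (fun g : Gam α => g.val.2.2.2) e fun _ => rfl
  refine ⟨W ++ v.map e, h1 W v, h2 W v, h3 W v, h4 W v, bound_append_map e (fun W v => ?_) W hW hv⟩
  simp only [weight_flat ω hω_app, h1, h2, h3, h4, hω_app]
  ring

theorem exists_mem_syncLang (hω_app : ∀ u v : List α, ω (u ++ v) = ω u + ω v)
    (h : Schedulable ω B u₁ u₂ u₃ u₄) (h0 : ω u₁ + ω u₂ + ω u₃ + ω u₄ = 0) :
    ∃ W ∈ syncLang ω B, flat W = u₁ ++ u₂ ++ u₃ ++ u₄ := by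
  obtain ⟨W, rfl, rfl, rfl, rfl, hW⟩ := h
  exact ⟨W, ⟨by rw [weight_flat ω hω_app, h0], hW⟩, rfl⟩

end Schedulable

theorem exists_mem_syncLang_of_bounded {α : Type*} {ω : List α → ℤ} {B : ℤ}
    (hω_nil : ω [] = 0) (hω_app : ∀ u v : List α, ω (u ++ v) = ω u + ω v) (w : List α)
    (h0 : ω w = 0) (hw : ∀ u, u <+: w → |ω u| ≤ B) : ∃ W ∈ syncLang ω B, flat W = w := by
  have hB : 0 ≤ B := by simpa [h0] using hw w (List.prefix_refl w)
  have h := (Schedulable.nil hω_nil hB).append_first (v := w) hω_app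
    (by simpa [hω_nil] using hw)
  obtain ⟨W, hW, hf⟩ := h.exists_mem_syncLang hω_app (by simp [hω_nil, h0])
  exact ⟨W, hW, by simpa using hf⟩

/-- The `n`-fold concatenation of a word. -/
def wordPow {α : Type*} (x : List α) : ℕ → List α
  | 0 => []
  | n + 1 => wordPow x n ++ x

theorem weight_wordPow {α : Type*} {ω : List α → ℤ} (hω_nil : ω [] = 0)
    (hω_app : ∀ u v : List α, ω (u ++ v) = ω u + ω v) (x : List α) (n : ℕ) :
    ω (wordPow x n) = n * ω x := by
  induction n with
  | zero => simp [wordPow, hω_nil]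
  | succ n ih =>
    rw [wordPow, hω_app, ih]
    push_cast
    ring

theorem map_wordPow {α M : Type*} [Monoid M] {Φ : List α → M} (hΦ_nil : Φ [] = 1)
    (hΦ_app : ∀ u v : List α, Φ (u ++ v) = Φ u * Φ v) (x : List α) (n : ℕ) :
    Φ (wordPow x n) = Φ x ^ n := by
  induction n with
  | zero => simp [wordPow, hΦ_nil]
  | succ n ih => rw [wordPow, hΦ_app, ih, pow_succ]

theorem weight_bounds_of_prefix {α : Type*} {ω : List α → ℤ} {A : ℤ} {x z : List α} (hx : 0 < ω x)
    (hxA : ∀ v, v <+: x → |ω v| ≤ A) (hzA : ∀ v, v <+: z → |ω v| ≤ A) :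
    0 < A ∧ ω x ≤ A ∧ -A ≤ ω z := by
  have h1 := abs_le.1 (hxA x (List.prefix_refl x))
  have h2 := abs_le.1 (hzA z (List.prefix_refl z))
  omega

theorem abs_weight_prefix_singleton_le {α : Type*} {ω : List α → ℤ} (hω_nil : ω [] = 0)
    (hω_letter : ∀ σ : α, |ω [σ]| ≤ 1) (σ : α) (v : List α) (hv : v <+: [σ]) : |ω v| ≤ 1 := by
  rcases List.prefix_concat_iff (l₁ := v) (l₂ := []) (a := σ) |>.1 (by simpa using hv) with h | h
  · simpa [h] using hω_letter σ
  · simp [List.prefix_nil.1 h, hω_nil]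

section Balance

variable {α : Type*} {ω : List α → ℤ}
  (hω_app : ∀ u v : List α, ω (u ++ v) = ω u + ω v) {A : ℤ} {x z : List α}
  (hx : 0 < ω x) (hz : ω z < 0) (hxA : ∀ v, v <+: x → |ω v| ≤ A) (hzA : ∀ v, v <+: z → |ω v| ≤ A)

include hω_app hx hz hxA hzA

/-- After an imbalance of at most `A + 1`, reading one more `x` or `z` restores the bound `A`. -/
theorem rebalance (w₁ u₂ u₄ : List α) (n m : ℕ)
    (h : Schedulable ω (2 * A + 1) (w₁ ++ wordPow x n) u₂ (wordPow z m) u₄)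
    (hs : |ω (w₁ ++ wordPow x n) + ω u₂ + ω (wordPow z m) + ω u₄| ≤ A + 1) :
    ∃ n' m', Schedulable ω (2 * A + 1) (w₁ ++ wordPow x n') u₂ (wordPow z m') u₄ ∧
      |ω (w₁ ++ wordPow x n') + ω u₂ + ω (wordPow z m') + ω u₄| ≤ A := by
  obtain ⟨hA, hxle, hzle⟩ := weight_bounds_of_prefix hx hxA hzA
  set s := ω (w₁ ++ wordPow x n) + ω u₂ + ω (wordPow z m) + ω u₄ with hsdef
  rw [abs_le] at hs
  by_cases h1 : |s| ≤ A
  · exact ⟨n, m, h, h1⟩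
  · rw [abs_le, not_and_or, not_le, not_le] at h1
    rcases h1 with h1 | h1
    · refine ⟨n + 1, m, ?_, ?_⟩
      · rw [wordPow, ← List.append_assoc]
        refine h.append_first hω_app fun v hv => ?_
        have := abs_le.1 (hxA v hv)
        rw [abs_le]
        omega
      · rw [wordPow, ← List.append_assoc, hω_app _ x, abs_le]
        omega
    · refine ⟨n, m + 1, ?_, ?_⟩
      · rw [wordPow]
        refine h.append_third hω_app fun v hv => ?_
        have := abs_le.1 (hzA v hv)
        rw [abs_le]
        omega
      · rw [wordPow, hω_app _ z, abs_le]
        omega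

theorem schedule_finish (w₁ u₂ u₄ : List α) (k l n m : ℕ)
    (h : Schedulable ω (2 * A + 1) (w₁ ++ wordPow x n) u₂ (wordPow z m) u₄)
    (hs : |ω (w₁ ++ wordPow x n) + ω u₂ + ω (wordPow z m) + ω u₄| ≤ A)
    (h0 : ω (w₁ ++ wordPow x n) + ω u₂ + ω (wordPow z m) + ω u₄ + k * ω x + l * ω z = 0) :
    Schedulable ω (2 * A + 1) (w₁ ++ wordPow x (n + k)) u₂ (wordPow z (m + l)) u₄ := by
  obtain ⟨hA, hxle, hzle⟩ := weight_bounds_of_prefix hx hxA hzA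
  induction hkl : k + l generalizing k l n m with
  | zero =>
    obtain ⟨rfl, rfl⟩ : k = 0 ∧ l = 0 := by omega
    exact h
  | succ c ih =>
    rw [abs_le] at hs
    by_cases hpos : 0 < ω (w₁ ++ wordPow x n) + ω u₂ + ω (wordPow z m) + ω u₄
    · have hkx : 0 ≤ (k : ℤ) * ω x := by positivity
      obtain ⟨l, rfl⟩ : ∃ l', l = l' + 1 := by
        refine Nat.exists_eq_succ_of_ne_zero ?_
        rintro rfl
        simp only [Nat.cast_zero, zero_mul] at h0
        omega
      have hw : ω (wordPow z (m + 1)) = ω (wordPow z m) + ω z := hω_app _ _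
      have := ih k l n (m + 1) ?_ ?_ ?_ (by omega)
      · rwa [show m + (l + 1) = m + 1 + l by omega]
      · refine h.append_third hω_app fun v hv => ?_
        have := abs_le.1 (hzA v hv)
        rw [abs_le]
        omega
      · rw [hw, abs_le]
        omega
      · push_cast at h0
        rw [hw]
        linarith
    · have hlz : (l : ℤ) * ω z ≤ 0 := mul_nonpos_of_nonneg_of_nonpos (by positivity) hz.le
      obtain ⟨k, rfl⟩ : ∃ k', k = k' + 1 := by
        refine Nat.exists_eq_succ_of_ne_zero ?_
        rintro rfl
        have hl : 0 < (l : ℤ) := by omega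
        have := mul_neg_of_pos_of_neg hl hz
        simp only [Nat.cast_zero, zero_mul] at h0
        omega
      have hw : ω (w₁ ++ wordPow x (n + 1)) = ω (w₁ ++ wordPow x n) + ω x := by
        rw [wordPow, ← List.append_assoc, hω_app _ x]
      have := ih k l (n + 1) m ?_ ?_ ?_ (by omega)
      · rwa [show n + (k + 1) = n + 1 + k by omega]
      · rw [wordPow, ← List.append_assoc]
        refine h.append_first hω_app fun v hv => ?_
        have := abs_le.1 (hxA v hv)
        rw [abs_le]
        omega
      · rw [hw, abs_le]
        omega
      · push_cast at h0
        rw [hw]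
        linarith

variable (hω_nil : ω [] = 0) (hω_letter : ∀ σ : α, |ω [σ]| ≤ 1)

include hω_nil hω_letter

theorem schedule_second (w₁ u₂ u₄ : List α) (n m : ℕ)
    (h : Schedulable ω (2 * A + 1) (w₁ ++ wordPow x n) u₂ (wordPow z m) u₄)
    (hs : |ω (w₁ ++ wordPow x n) + ω u₂ + ω (wordPow z m) + ω u₄| ≤ A) (v : List α) :
    ∃ n' m', Schedulable ω (2 * A + 1) (w₁ ++ wordPow x n') (u₂ ++ v) (wordPow z m') u₄ ∧
      |ω (w₁ ++ wordPow x n') + ω (u₂ ++ v) + ω (wordPow z m') + ω u₄| ≤ A := by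
  obtain ⟨hA, -, -⟩ := weight_bounds_of_prefix hx hxA hzA
  induction v using List.reverseRecOn with
  | nil => exact ⟨n, m, by simpa using h, by simpa using hs⟩
  | append_singleton v σ ih =>
    obtain ⟨n', m', h', hs'⟩ := ih
    rw [abs_le] at hs'
    have hσ := abs_weight_prefix_singleton_le hω_nil hω_letter σ
    rw [← List.append_assoc]
    refine rebalance hω_app hx hz hxA hzA w₁ _ u₄ n' m'
      (h'.append_second hω_app fun v' hv' => ?_) ?_
    · have := abs_le.1 (hσ v' hv')
      rw [abs_le]
      omega
    · have := abs_le.1 (hσ [σ] (List.prefix_refl _))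
      rw [hω_app _ [σ], abs_le]
      omega

theorem schedule_fourth (w₁ u₂ u₄ : List α) (n m : ℕ)
    (h : Schedulable ω (2 * A + 1) (w₁ ++ wordPow x n) u₂ (wordPow z m) u₄)
    (hs : |ω (w₁ ++ wordPow x n) + ω u₂ + ω (wordPow z m) + ω u₄| ≤ A) (v : List α) :
    ∃ n' m', Schedulable ω (2 * A + 1) (w₁ ++ wordPow x n') u₂ (wordPow z m') (u₄ ++ v) ∧
      |ω (w₁ ++ wordPow x n') + ω u₂ + ω (wordPow z m') + ω (u₄ ++ v)| ≤ A := by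
  obtain ⟨hA, -, -⟩ := weight_bounds_of_prefix hx hxA hzA
  induction v using List.reverseRecOn with
  | nil => exact ⟨n, m, by simpa using h, by simpa using hs⟩
  | append_singleton v σ ih =>
    obtain ⟨n', m', h', hs'⟩ := ih
    rw [abs_le] at hs'
    have hσ := abs_weight_prefix_singleton_le hω_nil hω_letter σ
    rw [← List.append_assoc]
    refine rebalance hω_app hx hz hxA hzA w₁ u₂ _ n' m'
      (h'.append_fourth hω_app fun v' hv' => ?_) ?_
    · have := abs_le.1 (hσ v' hv')
      rw [abs_le]
      omega
    · have := abs_le.1 (hσ [σ] (List.prefix_refl _))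
      rw [hω_app _ [σ], abs_le]
      omega

/-- Words `w₁ x ⋯ x w₂ z ⋯ z w₃` of weight zero with sufficiently many copies of `x` and `z` can be
read in parallel with bounded total weight. -/
theorem exists_schedulable_pow (w₁ w₂ w₃ : List α) (hw₁ : ∀ v, v <+: w₁ → |ω v| ≤ A) :
    ∃ n₀ : ℕ, ∀ n m : ℕ, n₀ ≤ n → n₀ ≤ m →
      ω w₁ + n * ω x + ω w₂ + m * ω z + ω w₃ = 0 →
      Schedulable ω (2 * A + 1) (w₁ ++ wordPow x n) w₂ (wordPow z m) w₃ := by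
  obtain ⟨hA, -, -⟩ := weight_bounds_of_prefix hx hxA hzA
  have h0 : Schedulable ω (2 * A + 1) (w₁ ++ wordPow x 0) [] (wordPow z 0) [] := by
    have := (Schedulable.nil (B := 2 * A + 1) hω_nil (by omega)).append_first (v := w₁)
      hω_app (fun v hv => by
        have := hw₁ v hv
        simp only [hω_nil]
        rw [zero_add, zero_add, zero_add, zero_add]
        omega)
    simpa [wordPow] using this
  obtain ⟨n₁, m₁, h1, hs1⟩ := schedule_second hω_app hx hz hxA hzA hω_nil hω_letter w₁ [] [] 0 0 h0
    (by simpa [wordPow, hω_nil] using hw₁ w₁ (List.prefix_refl _)) w₂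
  obtain ⟨n₂, m₂, h2, hs2⟩ := schedule_fourth hω_app hx hz hxA hzA hω_nil hω_letter w₁ _ [] n₁ m₁
    h1 hs1 w₃
  refine ⟨n₂ + m₂, fun n m hn hm h => ?_⟩
  obtain ⟨k, rfl⟩ := Nat.exists_eq_add_of_le (show n₂ ≤ n by omega)
  obtain ⟨l, rfl⟩ := Nat.exists_eq_add_of_le (show m₂ ≤ m by omega)
  refine schedule_finish hω_app hx hz hxA hzA w₁ w₂ w₃ k l n₂ m₂ h2 hs2 ?_
  simp only [hω_app, weight_wordPow hω_nil hω_app]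
  push_cast at h
  linarith

end Balance

/-- A walk with steps of size at most one that climbs from `0` to `N` visits the levels `0, …, N`
at increasing times between which it stays in `[0, N]`. -/
theorem exists_climb (h : ℕ → ℤ) (hstep : ∀ s, |h (s + 1) - h s| ≤ 1) (N a b : ℕ) (hab : a ≤ b)
    (ha : h a = 0) (hb : h b = N) :
    ∃ t : ℕ → ℕ, Monotone t ∧ (∀ i ≤ N, h (t i) = i) ∧ (∀ i, a ≤ t i ∧ t i ≤ b) ∧
      ∀ i j s, t i ≤ s → s ≤ t j → 0 ≤ h s ∧ h s ≤ N := by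
  classical
  simp only [abs_le] at hstep
  set c := Nat.findGreatest (fun s => a ≤ s ∧ h s ≤ 0) b with hc
  obtain ⟨hac, hc0⟩ : a ≤ c ∧ h c ≤ 0 :=
    Nat.findGreatest_spec (P := fun s => a ≤ s ∧ h s ≤ 0) hab ⟨le_rfl, ha.le⟩
  have hcb : c ≤ b := Nat.findGreatest_le b
  have hpos : ∀ s, c < s → s ≤ b → 0 < h s := fun s hcs hsb => by
    by_contra hs
    exact Nat.findGreatest_is_greatest hcs hsb ⟨hac.trans hcs.le, not_lt.1 hs⟩
  have hc' : h c = 0 := by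
    rcases hcb.eq_or_lt with hcb | hcb
    · rw [hcb] at hc0 ⊢
      omega
    · have := hpos (c + 1) (by omega) hcb
      have := hstep c
      omega
  have hex : ∀ i : ℕ, ∃ s, c ≤ s ∧ ((min i N : ℕ) : ℤ) ≤ h s := fun i => ⟨b, hcb, by omega⟩
  have hle : ∀ i, Nat.find (hex i) ≤ b := fun i => Nat.find_min' _ ⟨hcb, by omega⟩
  have hval : ∀ i, h (Nat.find (hex i)) = (min i N : ℕ) := fun i => by
    obtain ⟨h1, h2⟩ := Nat.find_spec (hex i)
    refine le_antisymm ?_ h2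
    rcases h1.eq_or_lt with h1 | h1
    · rw [← h1, hc']
      positivity
    · obtain ⟨m, hm⟩ := Nat.exists_eq_add_one_of_ne_zero (Nat.ne_zero_of_lt h1)
      have h3 := Nat.find_min (hex i) (m := m) (by omega)
      have := hstep m
      rw [hm] at h1 ⊢
      rw [not_and, not_le] at h3
      have := h3 (by omega)
      omega
  refine ⟨fun i => Nat.find (hex i), fun i j hij => ?_, fun i hi => ?_,
    fun i => ⟨hac.trans (Nat.find_spec (hex i)).1, hle i⟩, fun i j s h1 h2 => ?_⟩
  · exact Nat.find_mono fun s hs => ⟨hs.1, le_trans (by omega) hs.2⟩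
  · rw [hval, min_eq_left hi]
  · have hcs : c ≤ s := (Nat.find_spec (hex i)).1.trans h1
    constructor
    · rcases hcs.eq_or_lt with hcs | hcs
      · rw [← hcs, hc']
      · exact (hpos s hcs (h2.trans (hle j))).le
    · rcases h2.eq_or_lt with h2 | h2
      · rw [h2, hval]
        omega
      · have := Nat.find_min (hex j) h2
        rw [not_and, not_le] at this
        have := this hcs
        omega

/-- The factor of `w` between the positions `a` and `b`. -/
def slice {α : Type*} (w : List α) (a b : ℕ) : List α := (w.drop a).take (b - a)

section Slice

variable {α : Type*} (w : List α)

theorem slice_append_slice {a b c : ℕ} (hab : a ≤ b) (hbc : b ≤ c) :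
    slice w a b ++ slice w b c = slice w a c := by
  have h1 : c - a = (b - a) + (c - b) := by omega
  have h2 : b = a + (b - a) := by omega
  rw [slice, slice, slice, h1, List.take_add, List.drop_drop, ← h2]

theorem take_append_slice {a b : ℕ} (hab : a ≤ b) : w.take a ++ slice w a b = w.take b := by
  simpa [slice] using slice_append_slice w (Nat.zero_le a) hab

theorem exists_eq_take_of_prefix_take {u : List α} {a : ℕ} (hu : u <+: w.take a) :
    ∃ s ≤ a, u = w.take s := by
  refine ⟨min u.length a, min_le_right _ _, ?_⟩
  have h1 := List.prefix_iff_eq_take.1 hu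
  rw [List.take_take] at h1
  exact h1

theorem exists_eq_slice_of_prefix_slice {u : List α} {a b : ℕ} (hab : a ≤ b)
    (hu : u <+: slice w a b) : ∃ s, a ≤ s ∧ s ≤ b ∧ u = slice w a s := by
  obtain ⟨s, hs, rfl⟩ := exists_eq_take_of_prefix_take _ hu
  exact ⟨a + s, by omega, by omega, by simp [slice]⟩

variable {ω : List α → ℤ} (hω_app : ∀ u v : List α, ω (u ++ v) = ω u + ω v)

include hω_app

theorem weight_slice {a b : ℕ} (hab : a ≤ b) :
    ω (slice w a b) = ω (w.take b) - ω (w.take a) := by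
  rw [← take_append_slice w hab, hω_app]
  ring

theorem abs_weight_take_succ_sub_le (hω_nil : ω [] = 0) (hω_letter : ∀ σ : α, |ω [σ]| ≤ 1)
    (s : ℕ) : |ω (w.take (s + 1)) - ω (w.take s)| ≤ 1 := by
  rw [List.take_add_one, hω_app]
  cases w[s]? with
  | none => simp [hω_nil]
  | some σ => simpa using hω_letter σ

end Slice

theorem pow_succ_eq_mul_pow {M : Type*} [Monoid M] {a u : M} (h : a * a = a * u) (n : ℕ) :
    a ^ (n + 1) = a * u ^ n := by
  induction n with
  | zero => simp
  | succ n ih => rw [pow_succ', ih, ← mul_assoc, h, mul_assoc, ← pow_succ']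

/-- Along a climb of height `N` some factor of `w` can be pumped by an invertible matrix. -/
theorem exists_pumpable_slice {K : Type*} [Field K] {d N : ℕ} {α : Type*}
    (hN : ∀ P : ℕ → ℕ → Matrix (Fin d) (Fin d) K,
      (∀ i j l, i ≤ j → j ≤ l → P i j * P j l = P i l) →
      ∃ i j, i < j ∧ j ≤ N ∧ ∃ U : (Matrix (Fin d) (Fin d) K)ˣ, P i j * P i j = P i j * U)
    (Φ : List α → Matrix (Fin d) (Fin d) K) (hΦ_app : ∀ u v : List α, Φ (u ++ v) = Φ u * Φ v)
    (ω : List α → ℤ) (hω_nil : ω [] = 0) (hω_app : ∀ u v : List α, ω (u ++ v) = ω u + ω v)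
    (hω_letter : ∀ σ : α, |ω [σ]| ≤ 1) (w : List α) (a b : ℕ) (hab : a ≤ b)
    (hh : ω (w.take b) - ω (w.take a) = N) :
    ∃ p q : ℕ, a ≤ p ∧ p ≤ q ∧ q ≤ b ∧ 0 < ω (slice w p q) ∧
      (∀ v, v <+: slice w p q → |ω v| ≤ N) ∧
      ∃ U : (Matrix (Fin d) (Fin d) K)ˣ,
        Φ (slice w p q) * Φ (slice w p q) = Φ (slice w p q) * U := by
  obtain ⟨t, ht, hti, htab, hts⟩ := exists_climb (fun s => ω (w.take s) - ω (w.take a))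
    (fun s => by simpa using abs_weight_take_succ_sub_le w hω_app hω_nil hω_letter s)
    N a b hab (by simp) hh
  obtain ⟨i, j, hij, hjN, U, hU⟩ := hN (fun i j => Φ (slice w (t i) (t j))) fun i j l hij hjl => by
    rw [← hΦ_app, slice_append_slice w (ht hij) (ht hjl)]
  refine ⟨t i, t j, (htab i).1, ht hij.le, (htab j).2, ?_, fun v hv => ?_, U, hU⟩
  · have h1 := hti i (by omega)
    have h2 := hti j hjN
    rw [weight_slice w hω_app (ht hij.le)]
    omega
  · obtain ⟨s, h1, h2, rfl⟩ := exists_eq_slice_of_prefix_slice w (ht hij.le) hv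
    have h3 := hts i j s h1 h2
    have h4 := hti i (by omega)
    rw [weight_slice w hω_app h1, abs_le]
    omega

/-- A polynomial vanishing on the image of `flat '' syncLang ω (2 * N + 1)` also vanishes at every
word of weight zero whose first prefix with weight outside `(-N, N)` has weight `N`. -/
theorem eval_zero_of_prefix_weight_eq {K : Type*} [Field K] {d N : ℕ} {α : Type*}
    (hN : ∀ P : ℕ → ℕ → Matrix (Fin d) (Fin d) K,
      (∀ i j l, i ≤ j → j ≤ l → P i j * P j l = P i l) →
      ∃ i j, i < j ∧ j ≤ N ∧ ∃ U : (Matrix (Fin d) (Fin d) K)ˣ, P i j * P i j = P i j * U)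
    (Φ : List α → Matrix (Fin d) (Fin d) K) (hΦ_nil : Φ [] = 1)
    (hΦ_app : ∀ u v : List α, Φ (u ++ v) = Φ u * Φ v)
    (ω : List α → ℤ) (hω_nil : ω [] = 0) (hω_app : ∀ u v : List α, ω (u ++ v) = ω u + ω v)
    (hω_letter : ∀ σ : α, |ω [σ]| ≤ 1) (f : MvPolynomial (Fin d × Fin d) K)
    (hf : ∀ W ∈ syncLang ω (2 * N + 1),
      MvPolynomial.eval (fun ij => Φ (flat W) ij.1 ij.2) f = 0)
    (w : List α) (h0 : ω w = 0) (t : ℕ) (htN : ω (w.take t) = N)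
    (hts : ∀ s ≤ t, |ω (w.take s)| ≤ N) :
    MvPolynomial.eval (fun ij => Φ w ij.1 ij.2) f = 0 := by
  obtain ⟨p, q, -, hpq, hqt, hx, hxA, U, hU⟩ := exists_pumpable_slice hN Φ hΦ_app ω hω_nil hω_app
    hω_letter w 0 t (Nat.zero_le t) (by simpa [hω_nil] using htN)
  obtain ⟨p', q', htp, hpq', hqt', hz, hzA, V, hV⟩ := exists_pumpable_slice hN Φ hΦ_app
    (fun w => -ω w) (by simp [hω_nil]) (fun u v => by rw [hω_app, neg_add])
    (fun σ => by simpa using hω_letter σ) w t (max t w.length) (le_max_left _ _)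
    (by simp [List.take_of_length_le (le_max_right t w.length), h0, htN])
  simp only [abs_neg, Left.neg_pos_iff] at hz hzA
  have hw : w = w.take p ++ slice w p q ++ slice w q p' ++ slice w p' q' ++ w.drop q' := by
    rw [take_append_slice w hpq, take_append_slice w (hqt.trans htp), take_append_slice w hpq',
      List.take_append_drop]
  have hw₁ : ∀ v, v <+: w.take p → |ω v| ≤ N := fun v hv => by
    obtain ⟨s, hs, rfl⟩ := exists_eq_take_of_prefix_take w hv
    exact hts s (hs.trans (hpq.trans hqt))
  generalize w.take p = w₁, slice w p q = x, slice w q p' = w₂, slice w p' q' = z,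
    w.drop q' = w₃ at *
  subst hw
  obtain ⟨n₀, hn₀⟩ := exists_schedulable_pow hω_app hx hz hxA hzA hω_nil hω_letter w₁ w₂ w₃ hw₁
  obtain ⟨a, ha⟩ := Int.eq_ofNat_of_zero_le hx.le
  obtain ⟨b, hb⟩ := Int.eq_ofNat_of_zero_le (neg_nonneg.2 hz.le)
  simp only [hω_app] at h0
  have key := eval_zero_of_eventually_pow (U ^ b) (V ^ a) (Φ w₁ * Φ x) (Φ w₂ * Φ z) (Φ w₃) f n₀
    fun m hm => ?_
  · simpa only [hΦ_app, mul_assoc] using key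
  have hb1 : n₀ ≤ b * m + 1 := by nlinarith [show 0 < b by omega]
  have ha1 : n₀ ≤ a * m + 1 := by nlinarith [show 0 < a by omega]
  have hbal : ω w₁ + ((b * m + 1 : ℕ) : ℤ) * ω x + ω w₂ + ((a * m + 1 : ℕ) : ℤ) * ω z + ω w₃ =
      0 := by
    have hz' : ω z = -b := by omega
    rw [ha, hz'] at h0 ⊢
    push_cast
    linear_combination h0
  obtain ⟨W, hW, hWf⟩ := (hn₀ _ _ hb1 ha1 hbal).exists_mem_syncLang hω_app (by
    simpa only [hω_app, weight_wordPow hω_nil hω_app] using hbal)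
  have := hf W hW
  rw [hWf] at this
  simp only [hΦ_app, map_wordPow hΦ_nil hΦ_app, pow_succ_eq_mul_pow hU, pow_succ_eq_mul_pow hV,
    pow_mul] at this
  simpa only [mul_assoc, Units.val_pow_eq_pow_val] using this

/-- There is a regular language `K ⊆ Γ*` with `flat(K) ⊆ L_Z(ω)` such that the Zariski
closure of `φ(L_Z(ω))` equals the Zariski closure of `φ(L_BZ(ω) ∪ flat(K))`. -/
theorem zero_closure_via_flat {α : Type*} [Fintype α] (d : ℕ)
    (φ : List α → Matrix (Fin d) (Fin d) ℚ)
    (hφ_nil : φ [] = 1) (hφ_app : ∀ u v : List α, φ (u ++ v) = φ u * φ v)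
    (ω : List α → ℤ)
    (hω_nil : ω [] = 0) (hω_app : ∀ u v : List α, ω (u ++ v) = ω u + ω v)
    (hω_letter : ∀ σ : α, ω [σ] = -1 ∨ ω [σ] = 0 ∨ ω [σ] = 1) :
    ∃ K : Set (List (Gam α)), Language.IsRegular (K : Language (Gam α)) ∧
      flat '' K ⊆ zeroLang ω ∧
      matZClosure d ((fun w => liftMat (φ w)) '' zeroLang ω) =
        matZClosure d ((fun w => liftMat (φ w)) '' (boundedZeroLang d ω ∪ flat '' K)) := by
  obtain ⟨N, hN⟩ := exists_pumpable_factor Qbar d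
  have hω_abs : ∀ σ : α, |ω [σ]| ≤ 1 := fun σ => by
    rcases hω_letter σ with h | h | h <;> simp [h]
  have hflat : flat '' syncLang ω (2 * N + 1) ⊆ zeroLang ω := by
    rintro _ ⟨W, hW, rfl⟩
    exact hW.1
  refine ⟨syncLang ω (2 * N + 1), syncLang_isRegular ω hω_app _, hflat, Set.Subset.antisymm ?_ ?_⟩
  · refine fun A hA f hf => hA f ?_
    rintro _ ⟨w, hw, rfl⟩
    have hf' : ∀ W ∈ syncLang ω (2 * N + 1),
        MvPolynomial.eval (fun ij => liftMat (φ (flat W)) ij.1 ij.2) f = 0 :=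
      fun W hW => hf _ ⟨flat W, Or.inr ⟨W, hW, rfl⟩, rfl⟩
    have hΦ_nil : liftMat (φ []) = 1 := by
      rw [hφ_nil, liftMat, Matrix.map_one _ (map_zero _) (map_one _)]
    have hΦ_app : ∀ u v, liftMat (φ (u ++ v)) = liftMat (φ u) * liftMat (φ v) := fun u v => by
      rw [hφ_app, liftMat, Matrix.map_mul]
      rfl
    by_cases hbd : ∀ s, |ω (w.take s)| < N
    · obtain ⟨W, hW, rfl⟩ := exists_mem_syncLang_of_bounded (B := 2 * N + 1) hω_nil hω_app w hw
        fun u hu => by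
          rw [List.prefix_iff_eq_take.1 hu]
          have := hbd u.length
          omega
      exact hf' W hW
    · classical
      simp only [not_forall, not_lt] at hbd
      have hlt : ∀ s < Nat.find hbd, |ω (w.take s)| < N := fun s hs =>
        not_le.1 (Nat.find_min hbd hs)
      have hge := Nat.find_spec hbd
      generalize Nat.find hbd = t at hlt hge
      have heq : |ω (w.take t)| = N := by
        refine le_antisymm ?_ hge
        cases t with
        | zero => simp [hω_nil]
        | succ s =>
          have h1 := abs_le.1 (abs_weight_take_succ_sub_le w hω_app hω_nil hω_abs s)
          have h2 := abs_lt.1 (hlt s (Nat.lt_succ_self s))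
          rw [abs_le]
          omega
      have hle : ∀ s ≤ t, |ω (w.take s)| ≤ N := fun s hs => by
        rcases hs.eq_or_lt with rfl | hs
        · exact heq.le
        · exact (hlt s hs).le
      rcases eq_or_eq_neg_of_abs_eq heq with ht | ht
      · exact eval_zero_of_prefix_weight_eq hN (fun w => liftMat (φ w)) hΦ_nil hΦ_app ω hω_nil
          hω_app hω_abs f hf' w hw t ht hle
      · rw [← syncLang_neg] at hf'
        exact eval_zero_of_prefix_weight_eq hN (fun w => liftMat (φ w)) hΦ_nil hΦ_app
          (fun w => -ω w) (by simp [hω_nil]) (fun u v => by rw [hω_app, neg_add])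
          (fun σ => by simpa using hω_abs σ) f hf' w (neg_eq_zero.2 hw) t (by rw [ht, neg_neg])
          (fun s hs => by simpa using hle s hs)
  · refine fun A hA f hf => hA f ?_
    rintro _ ⟨w, hw, rfl⟩
    exact hf _ ⟨w, hw.elim And.left (fun h => hflat h), rfl⟩

end
end

section
/- Suppose ω(w) = 0, and suppose w has a prefix of weight η(d); let x be the shortest prefix of w with ω(x) ∈ {−η(d), η(d)} and assume ω(x) = η(d). Then w admits a factorization w = x₁ u x₂ w₁ y₂ v y₁ w₂ such that x = x₁ u x₂, the matrices φ(u) and φ(v) are stable, ω(u) > 0, ω(v) < 0, ω(w₁) = ω(w₂) = 0, and ω(y₂ v y₁) = −η(d). -/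
/-- A matrix `M` is *stable* if `rank M = rank M²`. -/
def MatStable {d : ℕ} (M : Matrix (Fin d) (Fin d) ℚ) : Prop :=
  M.rank = (M * M).rank

open Module in
/-- A linear map keeps the rank of `f` under composition iff its kernel meets the range of `f`
trivially. -/
theorem LinearMap.finrank_range_comp_eq_iff_disjoint {K V : Type*} [Field K] [AddCommGroup V]
    [Module K V] [FiniteDimensional K V] (g f : V →ₗ[K] V) :
    finrank K (range (g ∘ₗ f)) = finrank K (range f) ↔ Disjoint (ker g) (range f) := by
  have hr : range (g.domRestrict (range f)) = range (g ∘ₗ f) := by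
    rw [LinearMap.range_domRestrict, LinearMap.range_comp]
  have hn := (g.domRestrict (range f)).finrank_range_add_finrank_ker
  rw [hr] at hn
  rw [disjoint_comm, ← LinearMap.injective_domRestrict_iff,
    ← LinearMap.ker_eq_bot, ← Submodule.finrank_eq_zero]
  omega

/-- Over a field, a wedge product is nonzero iff its factors are linearly independent. -/
theorem exteriorPower.ιMulti_ne_zero_iff_linearIndependent {K V : Type*} [Field K]
    [AddCommGroup V] [Module K V] {r : ℕ} (v : Fin r → V) :
    exteriorPower.ιMulti K r v ≠ 0 ↔ LinearIndependent K v := by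
  refine ⟨fun h => by_contra fun hv => h (AlternatingMap.map_linearDependent _ v hv), fun hv => ?_⟩
  have h := (exteriorPower.ιMulti_family_linearIndependent_field (n := r) hv).ne_zero
    (Set.powersetCard.ofFinEmbEquiv (RelEmbedding.refl _))
  simpa [exteriorPower.ιMulti_family, Function.comp_def] using h

open Module in
/-- The top wedge product `e` of the range of a rank `r` endomorphism `f` detects which
endomorphisms `g` keep the rank of `f`: those whose `r`-th exterior power does not kill `e`. -/
theorem exists_exteriorPower_map_ne_zero_iff {K V : Type*} [Field K] [AddCommGroup V]
    [Module K V] [FiniteDimensional K V] (f : V →ₗ[K] V) {r : ℕ}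
    (hf : finrank K (LinearMap.range f) = r) :
    ∃ e : ⋀[K]^r V, ∀ g : V →ₗ[K] V,
      exteriorPower.map r g e ≠ 0 ↔ finrank K (LinearMap.range (g ∘ₗ f)) = r := by
  let b := finBasisOfFinrankEq K (LinearMap.range f) hf
  refine ⟨exteriorPower.ιMulti K r (fun i => (b i : V)), fun g => ?_⟩
  have hs : Submodule.span K (Set.range fun i => (b i : V)) = LinearMap.range f := by
    have := congrArg (Submodule.map (LinearMap.range f).subtype) b.span_eq
    rwa [Submodule.map_span, ← Set.range_comp, Submodule.map_subtype_top] at this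
  rw [exteriorPower.map_apply_ιMulti, exteriorPower.ιMulti_ne_zero_iff_linearIndependent,
    linearIndependent_iff_card_eq_finrank_span, Set.finrank, Set.range_comp, ← Submodule.map_span,
    hs, LinearMap.range_comp, Fintype.card_fin, eq_comm]

open Module in
/-- A sequence in which each vector is separated from its predecessors by a linear map has at most
`finrank` terms. -/
theorem le_finrank_of_separated {K W : Type*} [Field K] [AddCommGroup W] [Module K W]
    [FiniteDimensional K W] {n : ℕ} (e : ℕ → W)
    (h : ∀ k < n, ∃ g : W →ₗ[K] W, (∀ i < k, g (e i) = 0) ∧ g (e k) ≠ 0) :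
    n ≤ finrank K W := by
  suffices ∀ k ≤ n, k ≤ finrank K (Submodule.span K (e '' Set.Iio k)) from
    (this n le_rfl).trans (Submodule.finrank_le _)
  intro k
  induction k with
  | zero => simp
  | succ k ih =>
    intro hk
    obtain ⟨g, hg0, hg⟩ := h k hk
    refine (ih (by omega)).trans_lt (Submodule.finrank_lt_finrank_of_lt ?_)
    refine SetLike.lt_iff_le_and_exists.2
      ⟨Submodule.span_mono (Set.image_mono (Set.Iio_subset_Iio (by omega))), e k,
        Submodule.subset_span ⟨k, by simp, rfl⟩, fun hmem => hg ?_⟩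
    have hle : Submodule.span K (e '' Set.Iio k) ≤ LinearMap.ker g := by
      rw [Submodule.span_le]
      rintro _ ⟨i, hi, rfl⟩
      exact hg0 i hi
    exact hle hmem

open Module in
/-- If `p` factors on the left through `f` and on the right through `g`, all of the same rank as
`g ∘ f`, then `p ∘ p` has the rank of `p`. -/
theorem finrank_range_comp_self_of_factors {K V : Type*} [Field K] [AddCommGroup V]
    [Module K V] [FiniteDimensional K V] {p f g a b : V →ₗ[K] V}
    (hpf : p = f ∘ₗ a) (hpg : p = b ∘ₗ g)
    (hf : finrank K (LinearMap.range f) = finrank K (LinearMap.range p))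
    (hg : finrank K (LinearMap.range g) = finrank K (LinearMap.range p))
    (hgf : finrank K (LinearMap.range (g ∘ₗ f)) = finrank K (LinearMap.range p)) :
    finrank K (LinearMap.range (p ∘ₗ p)) = finrank K (LinearMap.range p) := by
  rw [← hf, LinearMap.finrank_range_comp_eq_iff_disjoint] at hgf
  have hr : LinearMap.range p = LinearMap.range f :=
    Submodule.eq_of_le_of_finrank_eq (hpf ▸ LinearMap.range_comp_le_range a f) hf.symm
  have hk : LinearMap.ker g = LinearMap.ker p := by
    refine Submodule.eq_of_le_of_finrank_eq (hpg ▸ LinearMap.ker_le_ker_comp g b) ?_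
    have h1 := g.finrank_range_add_finrank_ker
    have h2 := p.finrank_range_add_finrank_ker
    omega
  rw [LinearMap.finrank_range_comp_eq_iff_disjoint, ← hk, hr]
  exact hgf

open Module in
/-- Let `P i j` be the composite of the factors of a sequence of endomorphisms between positions
`i` and `j`. If all these composites have the same rank `r` and the sequence has more than
`(dim V).choose r` factors, then some composite is stable. -/
theorem exists_stable_of_const_rank {K V : Type*} [Field K] [AddCommGroup V]
    [Module K V] [FiniteDimensional K V] {n r : ℕ} (P : ℕ → ℕ → V →ₗ[K] V)
    (hP : ∀ i j k, i ≤ j → j ≤ k → k ≤ n → P i k = P i j ∘ₗ P j k)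
    (hr : ∀ i j, i < j → j ≤ n → finrank K (LinearMap.range (P i j)) = r)
    (hn : (finrank K V).choose r < n) :
    ∃ i j, i < j ∧ j ≤ n ∧ finrank K (LinearMap.range (P i j ∘ₗ P i j)) =
      finrank K (LinearMap.range (P i j)) := by
  by_contra! hns
  have he (i : ℕ) : ∃ e : ⋀[K]^r V, i < n → ∀ g : V →ₗ[K] V, exteriorPower.map r g e ≠ 0 ↔
      finrank K (LinearMap.range (g ∘ₗ P i (i + 1))) = r := by
    by_cases hi : i < n
    · obtain ⟨e, he⟩ := exists_exteriorPower_map_ne_zero_iff _ (hr i (i + 1) (by omega) hi)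
      exact ⟨e, fun _ => he⟩
    · exact ⟨0, fun h => absurd h hi⟩
  choose e he using he
  refine hn.not_ge ?_
  rw [← exteriorPower.finrank_eq K r]
  refine le_finrank_of_separated e fun k hk => ?_
  obtain _ | k := k
  · refine ⟨LinearMap.id, by simp, ?_⟩
    rw [← exteriorPower.map_id, he 0 hk, LinearMap.id_comp]
    exact hr 0 1 one_pos hk
  · refine ⟨exteriorPower.map r (P k (k + 1)), fun i hi => ?_, ?_⟩
    · by_contra h
      refine hns i (k + 1) hi (by omega) ?_
      have hpr := hr i (k + 1) hi (by omega)
      refine finrank_range_comp_self_of_factors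
        (hP i (i + 1) (k + 1) (by omega) (by omega) (by omega))
        (hP i k (k + 1) (by omega) (by omega) (by omega)) ?_ ?_ ?_
      · rw [hpr, hr i (i + 1) (by omega) (by omega)]
      · rw [hpr, hr k (k + 1) (by omega) (by omega)]
      · rw [hpr, (he i (by omega) _).1 h]
    · rw [he (k + 1) hk, ← hP k (k + 1) (k + 2) (by omega) (by omega) (by omega)]
      exact hr k (k + 2) (by omega) (by omega)

open Module in
/-- Among the composites `P i j` of a sequence of `2 ^ ((dim V + 1) * r)` endomorphisms, all of
rank at most `r`, some composite is stable. -/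
theorem exists_stable_of_rank_le {K V : Type*} [Field K] [AddCommGroup V]
    [Module K V] [FiniteDimensional K V] (r : ℕ) (P : ℕ → ℕ → V →ₗ[K] V)
    (hP : ∀ i j k, i ≤ j → j ≤ k → k ≤ 2 ^ ((finrank K V + 1) * r) → P i k = P i j ∘ₗ P j k)
    (hr : ∀ i j, i < j → j ≤ 2 ^ ((finrank K V + 1) * r) →
      finrank K (LinearMap.range (P i j)) ≤ r) :
    ∃ i j, i < j ∧ j ≤ 2 ^ ((finrank K V + 1) * r) ∧
      finrank K (LinearMap.range (P i j ∘ₗ P i j)) = finrank K (LinearMap.range (P i j)) := by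
  induction r generalizing P with
  | zero =>
    refine ⟨0, 1, one_pos, by simp, ?_⟩
    have h := hr 0 1 one_pos (by simp)
    rw [Nat.le_zero, Submodule.finrank_eq_zero, LinearMap.range_eq_bot] at h
    rw [h, LinearMap.comp_zero]
  | succ r ih =>
    set m := 2 ^ (finrank K V + 1) with hm
    set N := 2 ^ ((finrank K V + 1) * r) with hN
    have hmN : 2 ^ ((finrank K V + 1) * (r + 1)) = N * m := by rw [hm, hN, ← pow_add]; ring_nf
    rw [hmN] at hP hr ⊢
    have hm0 : 0 < m := by positivity
    have hmono {i j k l : ℕ} (hij : i ≤ j) (hjk : j ≤ k) (hkl : k ≤ l) (hl : l ≤ N * m) :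
        finrank K (LinearMap.range (P i l)) ≤ finrank K (LinearMap.range (P j k)) := by
      rw [hP i j l hij (hjk.trans hkl) hl, hP j k l hjk hkl hl, LinearMap.range_comp]
      exact (Submodule.finrank_map_le _ _).trans
        (Submodule.finrank_mono (LinearMap.range_comp_le_range _ _))
    by_contra! hns
    obtain ⟨i, j, hij, hj, hst⟩ := ih (fun i j => P (i * m) (j * m))
      (fun i j k hij hjk hk => hP _ _ _ (by gcongr) (by gcongr) (by gcongr)) (fun i j hij hj => by
        have hi : (i + 1) * m ≤ N * m := by gcongr; omega
        refine (hmono (k := (i + 1) * m) le_rfl (by gcongr; omega) (by gcongr; omega)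
          (by gcongr)).trans ?_
        by_contra! hlt
        rw [add_mul, one_mul] at hi hlt
        obtain ⟨a, b, hab, hb, hst⟩ := exists_stable_of_const_rank (n := m) (r := r + 1)
          (fun a b => P (i * m + a) (i * m + b))
          (fun a b c hab hbc hc => hP _ _ _ (by omega) (by omega) (by omega))
          (fun a b hab hb => le_antisymm (hr _ _ (by omega) (by omega))
            (hlt.trans_le (hmono (by omega) (by omega) (by omega) hi)))
          ((Nat.choose_le_two_pow _ _).trans_lt (Nat.pow_lt_pow_right (by norm_num) (by omega)))
        exact hns _ _ (by omega) (by omega) hst)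
    exact hns _ _ (by gcongr) (by gcongr) hst

/-- First passage times of an integer sequence whose increments are at most one. -/
theorem exists_passage_times {h : ℕ → ℤ} (h0 : h 0 = 0) (hstep : ∀ n, h (n + 1) ≤ h n + 1)
    {N L : ℕ} (hL : (N : ℤ) ≤ h L) :
    ∃ t : ℕ → ℕ, (∀ i j, i ≤ j → j ≤ N → t i ≤ t j) ∧ ∀ k ≤ N, h (t k) = k := by
  let t (k : ℕ) : ℕ := sInf {n | (k : ℤ) ≤ h n}
  have hmem (k : ℕ) (hk : k ≤ N) : (k : ℤ) ≤ h (t k) :=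
    Nat.sInf_mem (s := {n | (k : ℤ) ≤ h n}) ⟨L, by simp only [Set.mem_ofPred_eq]; omega⟩
  refine ⟨t, fun i j hij hj => Nat.sInf_le ?_, fun k hk => le_antisymm ?_ (hmem k hk)⟩
  · have := hmem j hj
    simp only [Set.mem_ofPred_eq]
    omega
  · cases hn : t k with
    | zero =>
      rw [h0]
      positivity
    | succ n =>
      have hlt : n ∉ {n | (k : ℤ) ≤ h n} := Nat.notMem_of_lt_sInf (show n < t k by omega)
      have := hstep n
      rw [Set.mem_ofPred_eq] at hlt
      omega

/-- A word of weight at least `η(d)` has a factor of positive weight with stable image. -/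
theorem exists_stable_factor {α : Type*} (d : ℕ) (φ : List α → Matrix (Fin d) (Fin d) ℚ)
    (hφ_app : ∀ u v : List α, φ (u ++ v) = φ u * φ v) (ω : List α → ℤ)
    (hω_nil : ω [] = 0) (hω_app : ∀ u v : List α, ω (u ++ v) = ω u + ω v)
    (hω_letter : ∀ σ : α, ω [σ] ≤ 1) (x : List α) (hx : eta d ≤ ω x) :
    ∃ x₁ u x₂ : List α, x = x₁ ++ u ++ x₂ ∧ MatStable (φ u) ∧ 0 < ω u := by
  set N := 2 ^ ((d + 1) * d) with hN
  have hN_eta : (N : ℤ) ≤ ω (x.take x.length) := by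
    have : (2 : ℤ) ^ ((d + 1) * d) ≤ 2 ^ (d * (d + 3)) :=
      pow_le_pow_right₀ (by norm_num) (by nlinarith)
    rw [List.take_length, hN]
    unfold eta at hx
    push_cast
    omega
  obtain ⟨t, htm, ht⟩ := exists_passage_times (h := fun n => ω (x.take n)) (by simpa) (fun n => by
    rw [List.take_add_one, hω_app]
    cases x[n]? with
    | none => simp [hω_nil]
    | some σ => simpa using hω_letter σ) hN_eta
  let W (i j : ℕ) : List α := (x.take (t j)).drop (t i)
  have hW {i j : ℕ} (hij : i ≤ j) (hj : j ≤ N) : x.take (t i) ++ W i j = x.take (t j) := by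
    have := List.take_append_drop (t i) (x.take (t j))
    rwa [List.take_take, min_eq_left (htm i j hij hj)] at this
  have hW_app {i j k : ℕ} (hij : i ≤ j) (hjk : j ≤ k) (hk : k ≤ N) : W i k = W i j ++ W j k := by
    rw [← List.append_right_inj (x.take (t i)), hW (hij.trans hjk) hk, ← List.append_assoc,
      hW hij (hjk.trans hk), hW hjk hk]
  obtain ⟨i, j, hij, hj, hst⟩ := exists_stable_of_rank_le d
    (fun i j => (φ (W i j)).mulVecLin)
    (fun i j k hij hjk hk => by
      rw [Module.finrank_fin_fun] at hk
      rw [hW_app hij hjk hk, hφ_app, Matrix.mulVecLin_mul])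
    (fun i j _ _ => (φ (W i j)).rank_le_width)
  rw [Module.finrank_fin_fun] at hj
  refine ⟨x.take (t i), W i j, x.drop (t j), ?_, ?_, ?_⟩
  · rw [hW hij.le hj, List.take_append_drop]
  · rw [MatStable, Matrix.rank, Matrix.rank, Matrix.mulVecLin_mul]
    exact hst.symm
  · have h := congrArg ω (hW hij.le hj)
    have hi := ht i (by omega)
    have hj' := ht j hj
    rw [hω_app] at h
    omega

/-- Suppose `ω(w) = 0` and `x` is the shortest prefix of `w` with
`ω(x) ∈ {-η(d), η(d)}`, and assume `ω(x) = η(d)`.  Then `w` factors as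
`w = x₁ u x₂ w₁ y₂ v y₁ w₂` with `x = x₁ u x₂`, `φ(u)` and `φ(v)` stable,
`ω(u) > 0`, `ω(v) < 0`, `ω(w₁) = ω(w₂) = 0`, and `ω(y₂ v y₁) = -η(d)`. -/
theorem zero_weight_decomposition {α : Type*} [Fintype α] (d : ℕ)
    (φ : List α → Matrix (Fin d) (Fin d) ℚ)
    (hφ_nil : φ [] = 1) (hφ_app : ∀ u v : List α, φ (u ++ v) = φ u * φ v)
    (ω : List α → ℤ)
    (hω_nil : ω [] = 0) (hω_app : ∀ u v : List α, ω (u ++ v) = ω u + ω v)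
    (hω_letter : ∀ σ : α, ω [σ] = -1 ∨ ω [σ] = 0 ∨ ω [σ] = 1)
    (w x : List α)
    (hw : ω w = 0)
    (hx_pre : x <+: w)
    (hx_val : ω x = eta d)
    (hx_min : ∀ p : List α, p <+: w → (ω p = eta d ∨ ω p = -eta d) →
        x.length ≤ p.length) :
    ∃ x₁ u x₂ w₁ y₂ v y₁ w₂ : List α,
      w = x₁ ++ u ++ x₂ ++ w₁ ++ y₂ ++ v ++ y₁ ++ w₂ ∧
      x = x₁ ++ u ++ x₂ ∧
      MatStable (φ u) ∧ MatStable (φ v) ∧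
      0 < ω u ∧ ω v < 0 ∧
      ω w₁ = 0 ∧ ω w₂ = 0 ∧
      ω (y₂ ++ v ++ y₁) = -eta d := by
  obtain ⟨w', rfl⟩ := hx_pre
  rw [hω_app, hx_val] at hw
  obtain ⟨x₁, u, x₂, hx, hu, hωu⟩ := exists_stable_factor d φ hφ_app ω hω_nil hω_app
    (fun σ => by have := hω_letter σ; omega) x hx_val.ge
  obtain ⟨y₂, v, y₁, hy, hv, hωv⟩ := exists_stable_factor d φ hφ_app (fun l => -ω l) (by simpa)
    (fun u v => by rw [hω_app, neg_add]) (fun σ => by have := hω_letter σ; omega) w' (by omega)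
  refine ⟨x₁, u, x₂, [], y₂, v, y₁, [], ?_, hx, hu, hv, hωu, by omega, hω_nil, hω_nil, ?_⟩
  · rw [hx, hy]
    simp
  · rw [← hy]
    omega
end
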